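/- arXiv:2108.10595 — 4 statements merged into one kernel-verified Lean document; each statement's English description precedes it below -/
import Mathlib

section
/- Validity of the GKnockoff construction: let X* ∈ ℝ^{n×m} have positive definite Gram matrix Σ* = X*ᵀX*, let s ∈ ℝ^m, let Ũ ∈ ℝ^{n×m} satisfy X*ᵀ Ũ = 0 and ŨᵀŨ = I_m, and let C ∈ ℝ^{m×m} satisfy CᵀC = 2·diag(s) − diag(s)·Σ*⁻¹·diag(s). Then the matrix X̃ = X*( I_m − Σ*⁻¹ diag(s) ) + Ũ C satisfies X̃ᵀX̃ = Σ* and X*ᵀX̃ = Σ* − diag(s); that is, X̃ is a GKnockoff of X* with gap vector s. -/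
open Matrix

/-- Validity of the GKnockoff construction. -/
theorem gknockoff_construction_valid {n m : ℕ}
    (Xstar : Matrix (Fin n) (Fin m) ℝ)
    (hpd : (Xstarᵀ * Xstar).PosDef)
    (s : Fin m → ℝ)
    (U : Matrix (Fin n) (Fin m) ℝ)
    (hUorth : Xstarᵀ * U = 0) (hUU : Uᵀ * U = 1)
    (C : Matrix (Fin m) (Fin m) ℝ)
    (hC : Cᵀ * C = (2 : ℝ) • Matrix.diagonal s -
      Matrix.diagonal s * (Xstarᵀ * Xstar)⁻¹ * Matrix.diagonal s) :
    (Xstar * (1 - (Xstarᵀ * Xstar)⁻¹ * Matrix.diagonal s) + U * C)ᵀ *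
        (Xstar * (1 - (Xstarᵀ * Xstar)⁻¹ * Matrix.diagonal s) + U * C) = Xstarᵀ * Xstar ∧
      Xstarᵀ * (Xstar * (1 - (Xstarᵀ * Xstar)⁻¹ * Matrix.diagonal s) + U * C) =
        Xstarᵀ * Xstar - Matrix.diagonal s := by
  have hdet : IsUnit (Xstarᵀ * Xstar).det := hpd.det_pos.ne'.isUnit
  have hinvT : ((Xstarᵀ * Xstar)⁻¹)ᵀ = (Xstarᵀ * Xstar)⁻¹ := by
    rw [Matrix.transpose_nonsing_inv, Matrix.transpose_mul, Matrix.transpose_transpose]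
  have hUX : Uᵀ * Xstar = 0 := by
    have h := congrArg Matrix.transpose hUorth
    simpa [Matrix.transpose_mul] using h
  have h2 : Xstarᵀ * (Xstar * (1 - (Xstarᵀ * Xstar)⁻¹ * Matrix.diagonal s) + U * C) =
      Xstarᵀ * Xstar - Matrix.diagonal s := by
    rw [Matrix.mul_add, ← Matrix.mul_assoc, ← Matrix.mul_assoc, hUorth, Matrix.zero_mul,
      add_zero, Matrix.mul_sub, Matrix.mul_one, Matrix.mul_nonsing_inv_cancel_left _ _ hdet]
  have h3 : Uᵀ * (Xstar * (1 - (Xstarᵀ * Xstar)⁻¹ * Matrix.diagonal s) + U * C) = C := by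
    rw [Matrix.mul_add, ← Matrix.mul_assoc, ← Matrix.mul_assoc, hUX, hUU, Matrix.zero_mul,
      zero_add, Matrix.one_mul]
  refine ⟨?_, h2⟩
  generalize hY : Xstar * (1 - (Xstarᵀ * Xstar)⁻¹ * Matrix.diagonal s) + U * C = Y at h2 h3 ⊢
  have hYT : Yᵀ = (1 - Matrix.diagonal s * (Xstarᵀ * Xstar)⁻¹) * Xstarᵀ + Cᵀ * Uᵀ := by
    rw [← hY, Matrix.transpose_add, Matrix.transpose_mul, Matrix.transpose_mul,
      Matrix.transpose_sub, Matrix.transpose_mul, hinvT, Matrix.transpose_one,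
      Matrix.diagonal_transpose]
  rw [hYT, Matrix.add_mul, Matrix.mul_assoc, Matrix.mul_assoc Cᵀ, h2, h3, hC, Matrix.sub_mul,
    Matrix.one_mul, Matrix.mul_sub, Matrix.nonsing_inv_mul_cancel_right _ _ hdet, two_smul]
  abel
end

section
/- Sure screening property of FuSIS: let S ⊆ {h,…,p−h} be the active set with J = |S|. Assume: (i) for every j ∈ S and every ε ∈ (0,1), P( |D̂(j,h) − D(j,h)| ≥ ε ) ≤ h·c₁·exp(−c₂ n ε²) for constants c₁, c₂ > 0; (ii) min_{j∈S} D(j,h) ≥ 2 c₃ n^{−κ} for constants c₃ > 0 and 0 ≤ κ ≤ 1/2, with c₃ n^{−κ} < 1. Then for every threshold ϑ with 0 < ϑ ≤ min_{j∈S} D(j,h) / 2, the screened set Â(ϑ) = {j : D̂(j,h) ≥ ϑ} satisfies P( S ⊆ Â(ϑ) ) ≥ 1 − J·h·c₁·exp(−c₂ c₃² n^{1−2κ}). -/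
open MeasureTheory Finset

/-- Sure screening property of FuSIS. -/
theorem fusis_sure_screening {Ω : Type*} [MeasurableSpace Ω]
    (P : Measure Ω) [IsProbabilityMeasure P]
    (p h n : ℕ) (hh : 1 ≤ h) (hn : 0 < n)
    (γhat : ℕ → Ω → ℝ) (γ : ℕ → ℝ)
    (S : Finset ℕ) (hS : ∀ j ∈ S, j ∈ Finset.Icc h (p - h))
    (Dhat : ℕ → Ω → ℝ)
    (hDhat : ∀ j ω, Dhat j ω =
      (1 / h : ℝ) * ∑ i ∈ Finset.Icc 1 h, |γhat (j - i + 1) ω - γhat (j + i) ω|)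
    (D : ℕ → ℝ)
    (hD : ∀ j, D j = (1 / h : ℝ) * ∑ i ∈ Finset.Icc 1 h, |γ (j - i + 1) - γ (j + i)|)
    (c₁ c₂ c₃ : ℝ) (hc₁ : 0 < c₁) (hc₂ : 0 < c₂) (hc₃ : 0 < c₃)
    (κ : ℝ) (hκ0 : 0 ≤ κ) (hκ1 : κ ≤ 1 / 2)
    -- (i) deviation inequality for the fused screening statistic
    (hdev : ∀ j ∈ S, ∀ ε : ℝ, ε ∈ Set.Ioo (0 : ℝ) 1 →
      P {ω | ε ≤ |Dhat j ω - D j|} ≤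
        ENNReal.ofReal (h * c₁ * Real.exp (-(c₂ * n * ε ^ 2))))
    -- (ii) minimum signal strength
    (hsig : ∀ j ∈ S, 2 * c₃ * (n : ℝ) ^ (-κ) ≤ D j)
    (hsmall : c₃ * (n : ℝ) ^ (-κ) < 1)
    (ϑ : ℝ) (hϑ0 : 0 < ϑ) (hϑ : ∀ j ∈ S, ϑ ≤ D j / 2) :
    ENNReal.ofReal
        (1 - S.card * h * c₁ * Real.exp (-(c₂ * c₃ ^ 2 * (n : ℝ) ^ (1 - 2 * κ)))) ≤
      P {ω | ∀ j ∈ S, ϑ ≤ Dhat j ω} := by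
  have hn' : (0 : ℝ) < n := by exact_mod_cast hn
  set ε : ℝ := c₃ * (n : ℝ) ^ (-κ) with hε
  have hε0 : 0 < ε := mul_pos hc₃ (Real.rpow_pos_of_pos hn' _)
  have hpow : (n : ℝ) ^ (1 - 2 * κ) = n * ((n : ℝ) ^ (-κ)) ^ 2 := by
    have h1 : (1 - 2 * κ : ℝ) = 1 + (-κ + -κ) := by ring
    rw [h1, Real.rpow_add hn', Real.rpow_add hn', Real.rpow_one]
    ring
  have hexp : c₂ * c₃ ^ 2 * (n : ℝ) ^ (1 - 2 * κ) = c₂ * n * ε ^ 2 := by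
    rw [hpow, hε]
    ring
  rw [hexp]
  set b : ℝ := h * c₁ * Real.exp (-(c₂ * n * ε ^ 2)) with hb
  have hb0 : 0 ≤ b := by positivity
  have hbad : P {ω | ∀ j ∈ S, ϑ ≤ Dhat j ω}ᶜ ≤ ENNReal.ofReal (S.card * b) := by
    calc P {ω | ∀ j ∈ S, ϑ ≤ Dhat j ω}ᶜ
        ≤ P (⋃ j ∈ S, {ω | ε ≤ |Dhat j ω - D j|}) := by
          apply measure_mono
          intro ω hω
          simp only [Set.mem_compl_iff, Set.mem_ofPred_eq, not_forall, not_le] at hω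
          obtain ⟨j, hj, hlt⟩ := hω
          simp only [Set.mem_iUnion, Set.mem_ofPred_eq]
          refine ⟨j, hj, ?_⟩
          have h1 := hsig j hj
          have h2 := hϑ j hj
          have h3 := neg_abs_le (Dhat j ω - D j)
          linarith
      _ ≤ ∑ j ∈ S, P {ω | ε ≤ |Dhat j ω - D j|} := measure_biUnion_finset_le _ _
      _ ≤ ∑ j ∈ S, ENNReal.ofReal b :=
          Finset.sum_le_sum fun j hj => hdev j hj ε ⟨hε0, hsmall⟩
      _ = ENNReal.ofReal (S.card * b) := by
          rw [Finset.sum_const, nsmul_eq_mul, ENNReal.ofReal_mul (Nat.cast_nonneg S.card),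
            ENNReal.ofReal_natCast]
  have hrw : (S.card * h * c₁ * Real.exp (-(c₂ * n * ε ^ 2)) : ℝ) = S.card * b := by
    rw [hb]
    ring
  rw [hrw, ENNReal.ofReal_sub _ (by positivity), ENNReal.ofReal_one, tsub_le_iff_right]
  calc (1 : ENNReal) = P Set.univ := measure_univ.symm
    _ = P ({ω | ∀ j ∈ S, ϑ ≤ Dhat j ω} ∪ {ω | ∀ j ∈ S, ϑ ≤ Dhat j ω}ᶜ) := by
        rw [Set.union_compl_self]
    _ ≤ P {ω | ∀ j ∈ S, ϑ ≤ Dhat j ω} + P {ω | ∀ j ∈ S, ϑ ≤ Dhat j ω}ᶜ := measure_union_le _ _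
    _ ≤ _ := by gcongr
end

section
/- Deviation inequality for the fused screening statistic: fix j with h ≤ j ≤ p−h. Suppose there exist constants c₁′, c₂′ > 0 such that for every k ∈ {j−h+1,…,j+h} and every ε ∈ (0,1), P( |γ̂_k − γ_k| ≥ ε ) ≤ c₁′·exp(−c₂′ n ε²). Then for every ε ∈ (0,1), P( |D̂(j,h) − D(j,h)| ≥ ε ) ≤ 4 h c₁′ · exp( −(c₂′/4) n ε² ). -/
open MeasureTheory Finset

/-- Deviation inequality for the fused screening statistic. -/
theorem fused_screening_deviation {Ω : Type*} [MeasurableSpace Ω]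
    (P : Measure Ω) [IsProbabilityMeasure P]
    (p h n j : ℕ) (hh : 1 ≤ h) (hn : 0 < n) (hj1 : h ≤ j) (hj2 : j ≤ p - h)
    (γhat : ℕ → Ω → ℝ) (γ : ℕ → ℝ)
    (c₁' c₂' : ℝ) (hc₁ : 0 < c₁') (hc₂ : 0 < c₂')
    (hdev : ∀ k ∈ Finset.Icc (j - h + 1) (j + h), ∀ ε : ℝ, ε ∈ Set.Ioo (0 : ℝ) 1 →
      P {ω | ε ≤ |γhat k ω - γ k|} ≤ ENNReal.ofReal (c₁' * Real.exp (-(c₂' * n * ε ^ 2))))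
    (ε : ℝ) (hε : ε ∈ Set.Ioo (0 : ℝ) 1) :
    P {ω | ε ≤ (|((1 / h : ℝ) * ∑ i ∈ Finset.Icc 1 h, |γhat (j - i + 1) ω - γhat (j + i) ω|) -
              ((1 / h : ℝ) * ∑ i ∈ Finset.Icc 1 h, |γ (j - i + 1) - γ (j + i)|)|)} ≤
      ENNReal.ofReal (4 * h * c₁' * Real.exp (-(c₂' / 4 * n * ε ^ 2))) := by
  obtain ⟨hε0, hε1⟩ := hε
  have hh0 : (0 : ℝ) < h := by exact_mod_cast hh
  have hsub : {ω | ε ≤ (|((1 / h : ℝ) * ∑ i ∈ Finset.Icc 1 h, |γhat (j - i + 1) ω - γhat (j + i) ω|) -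
              ((1 / h : ℝ) * ∑ i ∈ Finset.Icc 1 h, |γ (j - i + 1) - γ (j + i)|)|)} ⊆
      ⋃ k ∈ Finset.Icc (j - h + 1) (j + h), {ω | ε / 2 ≤ |γhat k ω - γ k|} := by
    intro ω hω
    by_contra hcon
    simp only [Set.mem_iUnion, Set.mem_setOf_eq, not_exists, not_le] at hcon hω
    have hterm : ∀ i ∈ Finset.Icc 1 h,
        |(|γhat (j - i + 1) ω - γhat (j + i) ω| - |γ (j - i + 1) - γ (j + i)|)| < ε := by
      intro i hi
      rw [Finset.mem_Icc] at hi
      have h1 := hcon (j - i + 1) (Finset.mem_Icc.2 ⟨by omega, by omega⟩)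
      have h2 := hcon (j + i) (Finset.mem_Icc.2 ⟨by omega, by omega⟩)
      refine lt_of_le_of_lt (abs_abs_sub_abs_le _ _) ?_
      rw [abs_lt] at h1 h2 ⊢
      constructor <;> linarith [h1.1, h1.2, h2.1, h2.2]
    have hsum : |∑ i ∈ Finset.Icc 1 h,
        (|γhat (j - i + 1) ω - γhat (j + i) ω| - |γ (j - i + 1) - γ (j + i)|)| < h * ε := by
      refine lt_of_le_of_lt (Finset.abs_sum_le_sum_abs _ _) ?_
      refine lt_of_lt_of_eq (Finset.sum_lt_sum_of_nonempty ⟨1, by simpa using hh⟩ hterm) ?_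
      simp
    rw [← mul_sub, ← Finset.sum_sub_distrib, abs_mul, abs_of_pos (by positivity : (0 : ℝ) < 1 / h),
      one_div_mul_eq_div, le_div_iff₀ hh0] at hω
    linarith
  refine (measure_mono hsub).trans ((measure_biUnion_finset_le _ _).trans ?_)
  refine (Finset.sum_le_sum fun k hk => hdev k hk (ε / 2) ⟨by linarith, by linarith⟩).trans ?_
  have hcard : j + h + 1 - (j - h + 1) = 2 * h := by omega
  rw [Finset.sum_const, Nat.card_Icc, hcard, ← ENNReal.ofReal_nsmul, nsmul_eq_mul]
  apply ENNReal.ofReal_le_ofReal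
  have he : -(c₂' * n * (ε / 2) ^ 2) = -(c₂' / 4 * n * ε ^ 2) := by ring
  rw [he]
  push_cast
  have : 0 < h * c₁' * Real.exp (-(c₂' / 4 * n * ε ^ 2)) := by positivity
  linarith
end

section
/- Deterministic ℓ₁ error bound for the Lasso: let A ∈ ℝ^{n×d}, let θ* ∈ ℝ^d have support S with |S| = s, let ε ∈ ℝⁿ, y = Aθ* + ε, and λ > 0. Assume ‖Aᵀε/n‖_∞ ≤ λ/2 and Λ_min(AᵀA/n) ≥ c₀ for some c₀ > 0. Then every minimizer θ̂ of L(θ) = (1/(2n))‖y − Aθ‖₂² + λ‖θ‖₁ satisfies, with δ = θ̂ − θ*: ‖δ_{S^c}‖₁ ≤ 3‖δ_S‖₁, ‖δ‖₂ ≤ 3λ√s/c₀, and ‖δ‖₁ ≤ 12 s λ / c₀. -/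
open Matrix Finset

/-- The Lasso objective `L(θ) = (1/(2n))‖y − Aθ‖₂² + λ‖θ‖₁`. -/
noncomputable def lassoLoss {n d : ℕ} (A : Matrix (Fin n) (Fin d) ℝ)
    (y : Fin n → ℝ) (lam : ℝ) (θ : Fin d → ℝ) : ℝ :=
  (1 / (2 * n)) * ∑ i, (y i - (A *ᵥ θ) i) ^ 2 + lam * ∑ j, |θ j|

/-- Deterministic ℓ₁ error bound for the Lasso. -/
theorem lasso_l1_error_bound {n d : ℕ} (hn : 0 < n)
    (A : Matrix (Fin n) (Fin d) ℝ)
    (θstar : Fin d → ℝ)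
    (S : Finset (Fin d)) (hS : ∀ k, k ∈ S ↔ θstar k ≠ 0)
    (ε : Fin n → ℝ) (y : Fin n → ℝ) (hy : y = A *ᵥ θstar + ε)
    (lam : ℝ) (hlam : 0 < lam)
    -- ‖Aᵀε/n‖_∞ ≤ λ/2
    (hnoise : ∀ j, |(Aᵀ *ᵥ ε) j / n| ≤ lam / 2)
    -- Λ_min(AᵀA/n) ≥ c₀
    (c₀ : ℝ) (hc₀ : 0 < c₀)
    (heig : ∀ v : Fin d → ℝ, c₀ * ∑ k, (v k) ^ 2 ≤ (v ⬝ᵥ ((Aᵀ * A) *ᵥ v)) / n)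
    (θhat : Fin d → ℝ)
    (hmin : ∀ θ, lassoLoss A y lam θhat ≤ lassoLoss A y lam θ) :
    (∑ k ∈ Sᶜ, |θhat k - θstar k|) ≤ 3 * ∑ k ∈ S, |θhat k - θstar k| ∧
      Real.sqrt (∑ k, (θhat k - θstar k) ^ 2) ≤ 3 * lam * Real.sqrt S.card / c₀ ∧
      (∑ k, |θhat k - θstar k|) ≤ 12 * S.card * lam / c₀ := by
  have hn' : (0:ℝ) < n := by exact_mod_cast hn
  set δ : Fin d → ℝ := θhat - θstar with hδ
  have hδk : ∀ k, θhat k - θstar k = δ k := fun k => rfl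
  simp only [hδk]
  set a := ∑ k ∈ S, |δ k| with ha
  set b := ∑ k ∈ Sᶜ, |δ k| with hb
  set D := ∑ k, (δ k) ^ 2 with hD
  have hab : ∑ k, |δ k| = a + b := (Finset.sum_add_sum_compl S _).symm
  have ha0 : 0 ≤ a := Finset.sum_nonneg fun _ _ => abs_nonneg _
  have hb0 : 0 ≤ b := Finset.sum_nonneg fun _ _ => abs_nonneg _
  have hD0 : 0 ≤ D := Finset.sum_nonneg fun _ _ => sq_nonneg _
  -- quadratic form
  have hq : δ ⬝ᵥ ((Aᵀ * A) *ᵥ δ) = ∑ i, ((A *ᵥ δ) i) ^ 2 := by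
    rw [← Matrix.mulVec_mulVec, Matrix.dotProduct_mulVec, Matrix.vecMul_transpose]
    simp only [dotProduct, sq]
  have hcross : ∑ i, ε i * (A *ᵥ δ) i = ∑ k, (Aᵀ *ᵥ ε) k * δ k := by
    change ε ⬝ᵥ (A *ᵥ δ) = (Aᵀ *ᵥ ε) ⬝ᵥ δ
    rw [Matrix.dotProduct_mulVec, Matrix.mulVec_transpose]
  have hcb : (∑ i, ε i * (A *ᵥ δ) i) / n ≤ lam / 2 * (a + b) := by
    rw [hcross, Finset.sum_div, ← hab, Finset.mul_sum]
    refine Finset.sum_le_sum fun k _ => ?_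
    calc (Aᵀ *ᵥ ε) k * δ k / n = ((Aᵀ *ᵥ ε) k / n) * δ k := by ring
      _ ≤ |((Aᵀ *ᵥ ε) k / n) * δ k| := le_abs_self _
      _ = |(Aᵀ *ᵥ ε) k / n| * |δ k| := abs_mul _ _
      _ ≤ _ := mul_le_mul_of_nonneg_right (hnoise k) (abs_nonneg _)
  have hl1 : ∑ k, |θstar k| - ∑ k, |θhat k| ≤ a - b := by
    rw [← Finset.sum_sub_distrib, ← Finset.sum_add_sum_compl S, sub_eq_add_neg a b, ha, hb,
      ← Finset.sum_neg_distrib]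
    refine add_le_add (Finset.sum_le_sum fun k _ => ?_) (Finset.sum_le_sum fun k hk => ?_)
    · rw [← hδk, abs_sub_comm]
      exact abs_sub_abs_le_abs_sub _ _
    · have h0 : θstar k = 0 := by
        by_contra h
        exact (Finset.mem_compl.mp hk) ((hS k).2 h)
      rw [← hδk, h0]; simp
  have h1 : ∑ i, (y i - (A *ᵥ θhat) i) ^ 2
      = ∑ i, (ε i) ^ 2 - 2 * ∑ i, ε i * (A *ᵥ δ) i + ∑ i, ((A *ᵥ δ) i) ^ 2 := by
    rw [Finset.mul_sum, ← Finset.sum_sub_distrib, ← Finset.sum_add_distrib]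
    refine Finset.sum_congr rfl fun i _ => ?_
    rw [hy, hδ, Matrix.mulVec_sub]
    simp only [Pi.add_apply, Pi.sub_apply]
    ring
  have h2 : ∑ i, (y i - (A *ᵥ θstar) i) ^ 2 = ∑ i, (ε i) ^ 2 := by
    refine Finset.sum_congr rfl fun i _ => ?_
    rw [hy]; simp
  have hm := hmin θstar
  unfold lassoLoss at hm
  rw [h1, h2] at hm
  have he := heig δ
  rw [hq] at he
  have hbasic : (∑ i, ((A *ᵥ δ) i) ^ 2) / n ≤ 2 * ((∑ i, ε i * (A *ᵥ δ) i) / n)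
      + 2 * (lam * (∑ k, |θstar k| - ∑ k, |θhat k|)) := by
    have e : ∀ x : ℝ, 1 / (2 * (n:ℝ)) * x = x / n / 2 := fun x => by field_simp
    rw [e, e, add_div, sub_div, mul_div_assoc] at hm
    linarith
  have hl := mul_le_mul_of_nonneg_left hl1 hlam.le
  have key : c₀ * D ≤ lam * (3 * a - b) := by linarith
  have hcone : b ≤ 3 * a := by
    have : 0 ≤ lam * (3 * a - b) := le_trans (by positivity) key
    have := nonneg_of_mul_nonneg_right this hlam
    linarith
  have hcs : a ≤ Real.sqrt S.card * Real.sqrt D := by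
    rw [← Real.sqrt_mul (by positivity)]
    apply Real.le_sqrt_of_sq_le
    refine (sq_sum_le_card_mul_sum_sq (s := S) (f := fun k => |δ k|)).trans ?_
    refine mul_le_mul_of_nonneg_left ?_ (by positivity)
    simp only [sq_abs]
    exact Finset.sum_le_sum_of_subset_of_nonneg (Finset.subset_univ _) fun _ _ _ => sq_nonneg _
  have hDD : Real.sqrt D * Real.sqrt D = D := Real.mul_self_sqrt hD0
  have hss : Real.sqrt S.card * Real.sqrt S.card = (S.card : ℝ) :=
    Real.mul_self_sqrt (by positivity)
  have hl2 : Real.sqrt D ≤ 3 * lam * Real.sqrt S.card / c₀ := by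
    rw [le_div_iff₀ hc₀]
    rcases (Real.sqrt_nonneg D).eq_or_lt with h | h
    · rw [← h]; simp; positivity
    · refine le_of_mul_le_mul_right ?_ h
      have h3 := mul_le_mul_of_nonneg_left hcs hlam.le
      have h4 := mul_nonneg hlam.le hb0
      calc Real.sqrt D * c₀ * Real.sqrt D = c₀ * D := by linear_combination c₀ * hDD
        _ ≤ _ := by linarith
  refine ⟨hcone, hl2, ?_⟩
  rw [hab]
  calc a + b ≤ 4 * (Real.sqrt S.card * Real.sqrt D) := by linarith
    _ ≤ 4 * (Real.sqrt S.card * (3 * lam * Real.sqrt S.card / c₀)) := by gcongr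
    _ = 12 * (Real.sqrt S.card * Real.sqrt S.card) * lam / c₀ := by ring
    _ = _ := by rw [hss]
end
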